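/- arXiv:2301.05005 — 2 statements merged into one kernel-verified Lean document; each statement's English description precedes it below -/
import Mathlib

section
/- Let k, m, n be natural numbers, A an m×k complex matrix, B a k×n complex matrix, and let r be the rank of the product AB. Then there exist an m×r complex matrix L and an r×n complex matrix R such that AB = LR, ‖L‖_∞ ≤ ‖A‖_∞, ‖R‖_∞ ≤ ‖B‖_∞, ‖L‖₂ ≤ ‖A‖₂, ‖R‖₂ ≤ ‖B‖₂, ‖L‖_r ≤ ‖A‖_r, and ‖R‖_c ≤ ‖B‖_c. -/
open Matrix BigOperators

/-- The ℓ²→ℓ² operator norm of a complex matrix. -/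
noncomputable def opNorm {m n : ℕ} (A : Matrix (Fin m) (Fin n) ℂ) : ℝ :=
  ‖(Matrix.toEuclideanLin A).toContinuousLinearMap‖

/-- The Frobenius (Hilbert–Schmidt) norm of a complex matrix. -/
noncomputable def frobNorm {m n : ℕ} (A : Matrix (Fin m) (Fin n) ℂ) : ℝ :=
  Real.sqrt (∑ i, ∑ j, ‖A i j‖ ^ 2)

/-- The column norm: the maximum Euclidean norm of a column. -/
noncomputable def colNorm {l m : ℕ} (L : Matrix (Fin l) (Fin m) ℂ) : ℝ :=
  ⨆ j : Fin m, Real.sqrt (∑ i, ‖L i j‖ ^ 2)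

/-- The row norm: the column norm of the conjugate transpose. -/
noncomputable def rowNorm {l m : ℕ} (L : Matrix (Fin l) (Fin m) ℂ) : ℝ :=
  colNorm Lᴴ

/-! Replacing `A` and `B` by `A * V` and `Vᴴ * B` with `Vᴴ * V = 1` increases none of the norms,
because `V` and `Vᴴ` are contractions. It keeps the product as soon as `V * Vᴴ`, the orthogonal
projection onto the column space of `V`, satisfies `V * Vᴴ * B = B` or `A * V * Vᴴ = A`. Compressing
to the column space of `B` ensures the former and makes the new left factor have the rank of the
product; compressing next to the column space of the conjugate transpose of that factor ensures the
latter and reaches inner dimension `rank (A * B)`. -/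

section ColumnSpace

variable {R ι k m n : Type*} [CommSemiring R] [Fintype ι] [Fintype k] [Fintype n]

lemma rank_mul_eq_of_range_eq {A : Matrix m k R} {B : Matrix k n R} {V : Matrix k ι R}
    (h : V.mulVecLin.range = B.mulVecLin.range) : (A * V).rank = (A * B).rank := by
  rw [Matrix.rank, Matrix.rank, Matrix.mulVecLin_mul, Matrix.mulVecLin_mul, LinearMap.range_comp,
    LinearMap.range_comp, h]

lemma mul_mul_eq_of_mul_eq_one_of_range_le [DecidableEq ι] {V : Matrix k ι R} {W : Matrix ι k R}
    {B : Matrix k n R} (hWV : W * V = 1) (hBV : B.mulVecLin.range ≤ V.mulVecLin.range) :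
    V * (W * B) = B := by
  refine Matrix.ext_iff_mulVec.mpr fun x ↦ ?_
  obtain ⟨y, hy⟩ : ∃ y, V *ᵥ y = B *ᵥ x := hBV ⟨x, rfl⟩
  calc (V * (W * B)) *ᵥ x = V *ᵥ W *ᵥ V *ᵥ y := by
        rw [← Matrix.mulVec_mulVec, ← Matrix.mulVec_mulVec, hy]
    _ = V *ᵥ y := by rw [Matrix.mulVec_mulVec y W V, hWV, Matrix.one_mulVec]
    _ = B *ᵥ x := hy

end ColumnSpace

section Compression

variable {𝕜 ι k m n : Type*} [RCLike 𝕜] [Fintype ι] [DecidableEq ι] [Fintype k] [Finite m]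
  [Fintype n]

lemma exists_conjTranspose_mul_self_eq_one_range_eq (S : Submodule 𝕜 (k → 𝕜))
    (hS : Fintype.card ι = Module.finrank 𝕜 S) :
    ∃ V : Matrix k ι 𝕜, Vᴴ * V = 1 ∧ V.mulVecLin.range = S := by
  let e := (WithLp.linearEquiv 2 𝕜 (k → 𝕜)).symm
  let T : Submodule 𝕜 (EuclideanSpace 𝕜 k) := S.map e.toLinearMap
  have finrank_T : Module.finrank 𝕜 T = Fintype.card ι := (e.finrank_map_eq S).trans hS.symm
  let b : OrthonormalBasis ι 𝕜 T := (stdOrthonormalBasis 𝕜 T).reindex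
    (Fintype.equivOfCardEq (by rw [Fintype.card_fin, finrank_T]))
  let V : Matrix k ι 𝕜 := .of fun i j ↦ (b j : EuclideanSpace 𝕜 k) i
  refine ⟨V, ?_, ?_⟩
  · ext i j
    rw [Matrix.one_apply, ← orthonormal_iff_ite.mp b.orthonormal i j]
    simp [V, Matrix.mul_apply, PiLp.inner_apply, mul_comm]
  · let f : T →ₗ[𝕜] (k → 𝕜) := e.symm.toLinearMap ∘ₗ T.subtype
    have range_col : Set.range V.col = f '' Set.range b := Set.range_comp f b
    calc V.mulVecLin.range = (Submodule.span 𝕜 (Set.range b)).map f := by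
          rw [Matrix.range_mulVecLin, range_col, Submodule.span_image]
      _ = T.map e.symm.toLinearMap := by
          rw [← b.coe_toBasis, b.toBasis.span_eq, Submodule.map_comp, Submodule.map_subtype_top]
      _ = S := (Submodule.map_symm_eq_iff e).mpr rfl

open scoped ComplexOrder in
lemma exists_conjTranspose_mul_self_eq_one_mul_eq (A : Matrix m k 𝕜) (B : Matrix k n 𝕜)
    (hι : Fintype.card ι = (A * B).rank) :
    ∃ V : Matrix k ι 𝕜, Vᴴ * V = 1 ∧ (A * V) * (Vᴴ * B) = A * B := by
  have := Fintype.ofFinite m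
  obtain ⟨P, hP, hPB⟩ := exists_conjTranspose_mul_self_eq_one_range_eq (ι := Fin B.rank)
    B.mulVecLin.range (Fintype.card_fin _)
  have rank_AP : (A * P)ᴴ.rank = (A * B).rank := by
    rw [Matrix.rank_conjTranspose, rank_mul_eq_of_range_eq hPB]
  obtain ⟨Q, hQ, hQA⟩ := exists_conjTranspose_mul_self_eq_one_range_eq
    (A * P)ᴴ.mulVecLin.range (hι.trans rank_AP.symm)
  have project_B : P * (Pᴴ * B) = B := mul_mul_eq_of_mul_eq_one_of_range_le hP hPB.ge
  have project_AP : A * P * Q * Qᴴ = A * P := by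
    simpa [Matrix.mul_assoc] using
      congrArg conjTranspose (mul_mul_eq_of_mul_eq_one_of_range_le hQ hQA.ge)
  refine ⟨P * Q, ?_, ?_⟩
  · calc (P * Q)ᴴ * (P * Q) = Qᴴ * (Pᴴ * P) * Q := by
          simp only [Matrix.conjTranspose_mul, Matrix.mul_assoc]
      _ = 1 := by rw [hP, Matrix.mul_one, hQ]
  · calc A * (P * Q) * ((P * Q)ᴴ * B) = A * P * Q * Qᴴ * (Pᴴ * B) := by
          simp only [Matrix.conjTranspose_mul, Matrix.mul_assoc]
      _ = A * B := by rw [project_AP, Matrix.mul_assoc, project_B]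

end Compression

section Norms

variable {l m n : ℕ}

open scoped Matrix.Norms.L2Operator in
lemma opNorm_conjTranspose (A : Matrix (Fin m) (Fin n) ℂ) : opNorm Aᴴ = opNorm A :=
  Matrix.l2_opNorm_conjTranspose A

open scoped Matrix.Norms.L2Operator in
lemma opNorm_mul_le (A : Matrix (Fin l) (Fin m) ℂ) (B : Matrix (Fin m) (Fin n) ℂ) :
    opNorm (A * B) ≤ opNorm A * opNorm B :=
  Matrix.l2_opNorm_mul A B

open scoped Matrix.Norms.L2Operator in
lemma opNorm_le_one_of_conjTranspose_mul_self_eq_one {V : Matrix (Fin m) (Fin n) ℂ}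
    (hV : Vᴴ * V = 1) : opNorm V ≤ 1 := by
  have norm_one_le : ‖(1 : Matrix (Fin n) (Fin n) ℂ)‖ ≤ 1 := by
    rw [← Matrix.l2_opNorm_toEuclideanCLM, map_one]
    exact ContinuousLinearMap.norm_id_le
  have norm_mul_self_le : ‖V‖ * ‖V‖ ≤ 1 := by
    rwa [← Matrix.l2_opNorm_conjTranspose_mul_self, hV]
  exact (le_abs_self _).trans (abs_le_one_iff_mul_self_le_one.mpr norm_mul_self_le)

lemma opNorm_nonneg (A : Matrix (Fin m) (Fin n) ℂ) : 0 ≤ opNorm A :=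
  norm_nonneg _

lemma frobNorm_nonneg (A : Matrix (Fin m) (Fin n) ℂ) : 0 ≤ frobNorm A :=
  Real.sqrt_nonneg _

lemma colNorm_nonneg (A : Matrix (Fin m) (Fin n) ℂ) : 0 ≤ colNorm A :=
  Real.iSup_nonneg fun _ ↦ Real.sqrt_nonneg _

lemma frobNorm_conjTranspose (A : Matrix (Fin m) (Fin n) ℂ) : frobNorm Aᴴ = frobNorm A := by
  simp only [frobNorm, Matrix.conjTranspose_apply, norm_star]
  rw [Finset.sum_comm]

lemma sqrt_sum_norm_sq_mulVec_le (A : Matrix (Fin m) (Fin n) ℂ) (x : Fin n → ℂ) :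
    √(∑ i, ‖(A *ᵥ x) i‖ ^ 2) ≤ opNorm A * √(∑ i, ‖x i‖ ^ 2) := by
  simpa [opNorm, EuclideanSpace.norm_eq] using
    (Matrix.toEuclideanLin A).toContinuousLinearMap.le_opNorm (WithLp.toLp 2 x)

lemma frobNorm_mul_le_opNorm_mul (A : Matrix (Fin l) (Fin m) ℂ) (B : Matrix (Fin m) (Fin n) ℂ) :
    frobNorm (A * B) ≤ opNorm A * frobNorm B := by
  have col_le (j : Fin n) : ∑ i, ‖(A * B) i j‖ ^ 2 ≤ opNorm A ^ 2 * ∑ i, ‖B i j‖ ^ 2 := by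
    rw [← Real.sqrt_le_sqrt_iff (by positivity), Real.sqrt_mul (sq_nonneg _),
      Real.sqrt_sq (opNorm_nonneg A)]
    exact sqrt_sum_norm_sq_mulVec_le A (B.col j)
  calc frobNorm (A * B) = √(∑ j, ∑ i, ‖(A * B) i j‖ ^ 2) := by rw [frobNorm, Finset.sum_comm]
    _ ≤ √(∑ j, opNorm A ^ 2 * ∑ i, ‖B i j‖ ^ 2) := by gcongr with j; exact col_le j
    _ = opNorm A * frobNorm B := by
      rw [← Finset.mul_sum, Real.sqrt_mul (sq_nonneg _), Real.sqrt_sq (opNorm_nonneg A),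
        Finset.sum_comm, frobNorm]

lemma frobNorm_mul_le_mul_opNorm (A : Matrix (Fin l) (Fin m) ℂ) (B : Matrix (Fin m) (Fin n) ℂ) :
    frobNorm (A * B) ≤ frobNorm A * opNorm B := by
  rw [← frobNorm_conjTranspose (A * B), ← frobNorm_conjTranspose A, ← opNorm_conjTranspose B,
    Matrix.conjTranspose_mul, mul_comm]
  exact frobNorm_mul_le_opNorm_mul Bᴴ Aᴴ

lemma colNorm_mul_le (A : Matrix (Fin l) (Fin m) ℂ) (B : Matrix (Fin m) (Fin n) ℂ) :
    colNorm (A * B) ≤ opNorm A * colNorm B := by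
  rw [colNorm, colNorm, Real.mul_iSup_of_nonneg (opNorm_nonneg A)]
  exact ciSup_mono (Set.finite_range _).bddAbove
    fun j ↦ sqrt_sum_norm_sq_mulVec_le A (B.col j)

lemma rowNorm_mul_le (A : Matrix (Fin l) (Fin m) ℂ) (B : Matrix (Fin m) (Fin n) ℂ) :
    rowNorm (A * B) ≤ rowNorm A * opNorm B := by
  rw [rowNorm, rowNorm, Matrix.conjTranspose_mul, ← opNorm_conjTranspose B, mul_comm]
  exact colNorm_mul_le Bᴴ Aᴴ

end Norms

/-- A product `A * B` of rank `r` can be rewritten as a product `L * R` with inner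
dimension `r`, without increasing the operator, Frobenius, row and column norms of the
respective factors. -/
theorem exists_rank_factorization_norms_le
    (k m n : ℕ) (A : Matrix (Fin m) (Fin k) ℂ) (B : Matrix (Fin k) (Fin n) ℂ) :
    ∃ (L : Matrix (Fin m) (Fin ((A * B).rank)) ℂ) (R : Matrix (Fin ((A * B).rank)) (Fin n) ℂ),
      A * B = L * R ∧
      opNorm L ≤ opNorm A ∧ opNorm R ≤ opNorm B ∧
      frobNorm L ≤ frobNorm A ∧ frobNorm R ≤ frobNorm B ∧
      rowNorm L ≤ rowNorm A ∧ colNorm R ≤ colNorm B := by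
  obtain ⟨V, hV, hAB⟩ := exists_conjTranspose_mul_self_eq_one_mul_eq A B (Fintype.card_fin _)
  have V_le : opNorm V ≤ 1 := opNorm_le_one_of_conjTranspose_mul_self_eq_one hV
  have Vstar_le : opNorm Vᴴ ≤ 1 := (opNorm_conjTranspose V).trans_le V_le
  exact ⟨A * V, Vᴴ * B, hAB.symm,
    (opNorm_mul_le A V).trans (mul_le_of_le_one_right (opNorm_nonneg A) V_le),
    (opNorm_mul_le Vᴴ B).trans (mul_le_of_le_one_left (opNorm_nonneg B) Vstar_le),
    (frobNorm_mul_le_mul_opNorm A V).trans (mul_le_of_le_one_right (frobNorm_nonneg A) V_le),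
    (frobNorm_mul_le_opNorm_mul Vᴴ B).trans (mul_le_of_le_one_left (frobNorm_nonneg B) Vstar_le),
    (rowNorm_mul_le A V).trans (mul_le_of_le_one_right (colNorm_nonneg Aᴴ) V_le),
    (colNorm_mul_le Vᴴ B).trans (mul_le_of_le_one_left (colNorm_nonneg B) Vstar_le)⟩
end

section
/- Let X be an m×n complex matrix and let l = min(m, n). Then ‖S_X‖ ≤ 1 if and only if there exist an l×m complex matrix L and an l×n complex matrix R with ‖L‖_c ≤ 1, ‖R‖_c ≤ 1, and X = Lᴴ R. -/
open Matrix BigOperators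

/-- The Schur multiplier norm of `X` : the operator norm of `A ↦ X ∘ A` where the
matrices carry the ℓ²→ℓ² operator norm. -/
noncomputable def schurNorm {m n : ℕ} (X : Matrix (Fin m) (Fin n) ℂ) : ℝ :=
  ⨆ A : {A : Matrix (Fin m) (Fin n) ℂ // opNorm A ≤ 1}, opNorm (Matrix.hadamard X A.1)

/-!
If `X = Lᴴ * R`, then `xᴴ (X ⊙ A) y` is a sum of values `x_tᴴ A y_t`, where `x_t` and `y_t` are
`x` and `y` rescaled by the `t`-th rows of `L` and `R`, and the column bounds give
`∑ t, ‖x_t‖² ≤ ‖x‖²` and `∑ t, ‖y_t‖² ≤ ‖y‖²`.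

Conversely, it suffices to find a positive semidefinite matrix with unit diagonal and off-diagonal
block `X`: its Gram vectors, projected onto the span of the smaller of the two families, are the
columns of `L` and `R`. The positive semidefinite matrices of fixed trace form a compact convex set,
so if there is no such completion then Hahn–Banach gives `C` and weights `a, b > 0` with
`Re xᴴ C y ≤ ∑ i, a i |x i|² + ∑ j, b j |y j|²` for all `x` and `y`, but
`∑ i, a i + ∑ j, b j < Re ∑ i j, C i j * X i j`. Then `A i j = C i j / (2 √(a i) √(b j))` is a
contraction, whereas testing `X ⊙ A` against `√a` and `√b` shows that it is not.
-/

open RCLike (re)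
open scoped Matrix.Norms.L2Operator ComplexOrder

section Contractions

variable {𝕜 ι κ τ : Type*} [RCLike 𝕜] [Fintype ι] [Fintype κ] [Fintype τ]

lemma norm_le_one_iff_two_mul_re_dotProduct_le [DecidableEq κ] (A : Matrix ι κ 𝕜) :
    ‖A‖ ≤ 1 ↔ ∀ (x : ι → 𝕜) (y : κ → 𝕜),
      2 * re (star x ⬝ᵥ A *ᵥ y) ≤ ∑ i, ‖x i‖ ^ 2 + ∑ j, ‖y j‖ ^ 2 := by
  have form_eq_inner (x : ι → 𝕜) (y : κ → 𝕜) :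
      star x ⬝ᵥ A *ᵥ y = inner 𝕜 (WithLp.toLp 2 x) (WithLp.toLp 2 (A *ᵥ y)) := by
    rw [EuclideanSpace.inner_toLp_toLp, dotProduct_comm]
  constructor
  · intro hA x y
    let v := WithLp.toLp 2 x
    let w := WithLp.toLp 2 y
    let Aw := WithLp.toLp 2 (A *ᵥ y)
    have norm_Aw_le : ‖Aw‖ ≤ ‖w‖ :=
      (A.l2_opNorm_mulVec w).trans (mul_le_of_le_one_left (norm_nonneg _) hA)
    calc 2 * re (star x ⬝ᵥ A *ᵥ y) = 2 * re (inner 𝕜 v Aw) := by rw [form_eq_inner]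
      _ ≤ 2 * (‖v‖ * ‖Aw‖) := by gcongr; exact re_inner_le_norm v Aw
      _ ≤ 2 * (‖v‖ * ‖w‖) := by gcongr
      _ ≤ ‖v‖ ^ 2 + ‖w‖ ^ 2 := by rw [← mul_assoc]; exact two_mul_le_add_sq _ _
      _ = ∑ i, ‖x i‖ ^ 2 + ∑ j, ‖y j‖ ^ 2 := by simp only [EuclideanSpace.norm_sq_eq, v, w]
  · intro h
    rw [l2_opNorm_def]
    refine ContinuousLinearMap.opNorm_le_bound _ zero_le_one fun w => ?_
    let Aw := WithLp.toLp 2 (A *ᵥ w.ofLp)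
    have two_mul_sq_le : 2 * ‖Aw‖ ^ 2 ≤ ‖Aw‖ ^ 2 + ‖w‖ ^ 2 := by
      have := h (A *ᵥ w.ofLp) w.ofLp
      rw [form_eq_inner, inner_self_eq_norm_sq] at this
      simpa only [EuclideanSpace.norm_sq_eq] using this
    have norm_Aw_le : ‖Aw‖ ≤ ‖w‖ :=
      (sq_le_sq₀ (norm_nonneg _) (norm_nonneg _)).1 (by linarith)
    rw [one_mul]
    exact norm_Aw_le

lemma dotProduct_conjTranspose_mul_hadamard_mulVec (L : Matrix τ ι 𝕜) (R : Matrix τ κ 𝕜)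
    (A : Matrix ι κ 𝕜) (x : ι → 𝕜) (y : κ → 𝕜) :
    star x ⬝ᵥ ((Lᴴ * R) ⊙ A) *ᵥ y = ∑ t, star (L t * x) ⬝ᵥ A *ᵥ (R t * y) := by
  simp only [dotProduct, mulVec, hadamard_apply, mul_apply, conjTranspose_apply, Pi.star_apply,
    Pi.mul_apply, Finset.mul_sum, Finset.sum_mul, star_mul']
  rw [Finset.sum_comm (s := (Finset.univ : Finset τ))]
  refine Finset.sum_congr rfl fun i _ => ?_
  rw [Finset.sum_comm]
  refine Finset.sum_congr rfl fun t _ => Finset.sum_congr rfl fun j _ => ?_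
  ring

lemma sum_sum_norm_mul_sq_le {M : Matrix τ ι 𝕜} (hM : ∀ i, ∑ t, ‖M t i‖ ^ 2 ≤ 1) (x : ι → 𝕜) :
    ∑ t, ∑ i, ‖(M t * x) i‖ ^ 2 ≤ ∑ i, ‖x i‖ ^ 2 := by
  rw [Finset.sum_comm]
  refine Finset.sum_le_sum fun i _ => ?_
  calc ∑ t, ‖(M t * x) i‖ ^ 2 = (∑ t, ‖M t i‖ ^ 2) * ‖x i‖ ^ 2 := by
        simp only [Pi.mul_apply, norm_mul, mul_pow, Finset.sum_mul]
    _ ≤ ‖x i‖ ^ 2 := mul_le_of_le_one_left (by positivity) (hM i)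

theorem norm_conjTranspose_mul_hadamard_le_one [DecidableEq κ] {L : Matrix τ ι 𝕜}
    {R : Matrix τ κ 𝕜} {A : Matrix ι κ 𝕜} (hL : ∀ i, ∑ t, ‖L t i‖ ^ 2 ≤ 1)
    (hR : ∀ j, ∑ t, ‖R t j‖ ^ 2 ≤ 1) (hA : ‖A‖ ≤ 1) : ‖(Lᴴ * R) ⊙ A‖ ≤ 1 := by
  rw [norm_le_one_iff_two_mul_re_dotProduct_le] at hA ⊢
  intro x y
  calc 2 * re (star x ⬝ᵥ ((Lᴴ * R) ⊙ A) *ᵥ y)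
      = ∑ t, 2 * re (star (L t * x) ⬝ᵥ A *ᵥ (R t * y)) := by
        rw [dotProduct_conjTranspose_mul_hadamard_mulVec, map_sum, Finset.mul_sum]
    _ ≤ ∑ t, (∑ i, ‖(L t * x) i‖ ^ 2 + ∑ j, ‖(R t * y) j‖ ^ 2) :=
        Finset.sum_le_sum fun t _ => hA (L t * x) (R t * y)
    _ = ∑ t, ∑ i, ‖(L t * x) i‖ ^ 2 + ∑ t, ∑ j, ‖(R t * y) j‖ ^ 2 := Finset.sum_add_distrib
    _ ≤ ∑ i, ‖x i‖ ^ 2 + ∑ j, ‖y j‖ ^ 2 :=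
        add_le_add (sum_sum_norm_mul_sq_le hL x) (sum_sum_norm_mul_sq_le hR y)

end Contractions

section PosSemidefWithTrace

variable {𝕜 α β σ : Type*} [RCLike 𝕜]

lemma conjTranspose_mul_self_apply_self [Fintype β] (B : Matrix β α 𝕜) (i : α) :
    (Bᴴ * B) i i = ((∑ k, ‖B k i‖ ^ 2 : ℝ) : 𝕜) := by
  simp [mul_apply, RCLike.conj_mul]

variable [Fintype α]

open scoped MatrixOrder in
lemma exists_eq_conjTranspose_mul_self {P : Matrix α α 𝕜} (hP : P.PosSemidef) :
    ∃ B : Matrix α α 𝕜, P = Bᴴ * B := by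
  classical
  exact CStarAlgebra.nonneg_iff_eq_star_mul_self.1 hP.nonneg

/-- The positive semidefinite matrices of trace `r`, a compact base of the positive semidefinite
cone when `0 < r`. The trace of such a matrix is real, so only its real part is prescribed. -/
def posSemidefWithTrace (𝕜 α : Type*) [RCLike 𝕜] [Fintype α] (r : ℝ) : Set (Matrix α α 𝕜) :=
  {P | P.PosSemidef ∧ re P.trace = r}

lemma convex_posSemidefWithTrace (r : ℝ) : Convex ℝ (posSemidefWithTrace 𝕜 α r) := by
  rintro P ⟨hP, hPr⟩ Q ⟨hQ, hQr⟩ a b ha hb hab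
  refine ⟨(hP.smul ha).add (hQ.smul hb), ?_⟩
  rw [trace_add, trace_smul, trace_smul, map_add, RCLike.smul_re, RCLike.smul_re, hPr, hQr,
    ← add_mul, hab, one_mul]

lemma isCompact_setOf_sum_sum_norm_sq_eq [Fintype β] (r : ℝ) :
    IsCompact {B : β → α → 𝕜 | ∑ i, ∑ k, ‖B k i‖ ^ 2 = r} := by
  refine Metric.isCompact_of_isClosed_isBounded
    (isClosed_eq (by fun_prop) continuous_const) ?_
  refine (Metric.isBounded_closedBall (x := 0) (r := √r)).subset fun B hB => ?_
  simp only [mem_closedBall_zero_iff, pi_norm_le_iff_of_nonneg (Real.sqrt_nonneg r)]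
  refine fun k i => Real.le_sqrt_of_sq_le ?_
  calc ‖B k i‖ ^ 2 ≤ ∑ k, ‖B k i‖ ^ 2 :=
        Finset.single_le_sum (f := fun k => ‖B k i‖ ^ 2) (fun _ _ => by positivity)
          (Finset.mem_univ k)
    _ ≤ ∑ i, ∑ k, ‖B k i‖ ^ 2 :=
        Finset.single_le_sum (f := fun i => ∑ k, ‖B k i‖ ^ 2) (fun _ _ => by positivity)
          (Finset.mem_univ i)
    _ = r := hB

lemma isCompact_posSemidefWithTrace (r : ℝ) : IsCompact (posSemidefWithTrace 𝕜 α r) := by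
  have re_trace (B : Matrix α α 𝕜) : re (Bᴴ * B).trace = ∑ i, ∑ k, ‖B k i‖ ^ 2 := by
    simp only [trace, diag_apply, conjTranspose_mul_self_apply_self, map_sum, RCLike.ofReal_re]
  have eq_image : posSemidefWithTrace 𝕜 α r =
      (fun B : Matrix α α 𝕜 => Bᴴ * B) '' {B | ∑ i, ∑ k, ‖B k i‖ ^ 2 = r} := by
    ext P
    constructor
    · rintro ⟨hP, hr⟩
      obtain ⟨B, rfl⟩ := exists_eq_conjTranspose_mul_self hP
      exact ⟨B, (re_trace B).symm.trans hr, rfl⟩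
    · rintro ⟨B, hB, rfl⟩
      exact ⟨posSemidef_conjTranspose_mul_self B, (re_trace B).trans hB⟩
  rw [eq_image]
  exact (isCompact_setOf_sum_sum_norm_sq_eq r).image (by fun_prop)

variable [Fintype σ]

lemma exists_re_dotProduct_lt_of_notMem {K : Set (σ → 𝕜)} (hK : Convex ℝ K) (hKc : IsClosed K)
    {v : σ → 𝕜} (hv : v ∉ K) :
    ∃ (c : σ → 𝕜) (u : ℝ), (∀ p ∈ K, re (c ⬝ᵥ p) < u) ∧ u < re (c ⬝ᵥ v) := by
  classical
  obtain ⟨f, u, hfK, hfv⟩ := RCLike.geometric_hahn_banach_closed_point (𝕜 := 𝕜) hK hKc hv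
  obtain ⟨c, hc⟩ := (dotProductEquiv 𝕜 σ).surjective f.toLinearMap
  have hf (p : σ → 𝕜) : f p = c ⬝ᵥ p := (LinearMap.congr_fun hc p).symm
  simp only [hf] at hfK hfv
  exact ⟨c, u, hfK, hfv⟩

theorem exists_re_dotProduct_lt_of_forall_posSemidef_ne (π : Matrix α α 𝕜 →ₗ[𝕜] σ → 𝕜)
    {r : ℝ} (hr : 0 < r) {v : σ → 𝕜}
    (hv : ∀ P : Matrix α α 𝕜, P.PosSemidef → re P.trace = r → π P ≠ v) :
    ∃ (c : σ → 𝕜) (s : ℝ),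
      (∀ P : Matrix α α 𝕜, P.PosSemidef → P ≠ 0 → re (c ⬝ᵥ π P) < s * re P.trace) ∧
        r * s < re (c ⬝ᵥ v) := by
  have hKc : IsCompact (π '' posSemidefWithTrace 𝕜 α r) :=
    (isCompact_posSemidefWithTrace r).image π.continuous_of_finiteDimensional
  have hvK : v ∉ π '' posSemidefWithTrace 𝕜 α r := by
    rintro ⟨P, ⟨hP, hPr⟩, hPv⟩
    exact hv P hP hPr hPv
  obtain ⟨c, u, hcu, huv⟩ := exists_re_dotProduct_lt_of_notMem
    ((convex_posSemidefWithTrace r).linear_image (π.restrictScalars ℝ)) hKc.isClosed hvK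
  refine ⟨c, u / r, fun P hP hP0 => ?_, by rwa [mul_div_cancel₀ u hr.ne']⟩
  have htr : 0 < re P.trace :=
    (RCLike.pos_iff.1 (hP.trace_nonneg.lt_of_ne' (hP.trace_eq_zero_iff.not.2 hP0))).1
  let t : ℝ := r / re P.trace
  have re_trace_smul : re (t • P).trace = r := by
    rw [trace_smul, RCLike.smul_re, div_mul_cancel₀ _ htr.ne']
  have hlt := hcu _ ⟨t • P, ⟨hP.smul (by positivity), re_trace_smul⟩, rfl⟩
  rw [map_smul, dotProduct_smul, RCLike.smul_re, div_mul_eq_mul_div, div_lt_iff₀ htr] at hlt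
  rwa [div_mul_eq_mul_div, lt_div_iff₀' hr]

end PosSemidefWithTrace

section Completion

variable {𝕜 ι κ : Type*} [RCLike 𝕜] [Fintype ι] [Fintype κ] {X : Matrix ι κ 𝕜}

lemma exists_re_sum_lt_of_forall_posSemidef_diag_ne_one
    (hX : ∀ P : Matrix (ι ⊕ κ) (ι ⊕ κ) 𝕜, P.PosSemidef → P.toBlocks₁₂ = X → P.diag ≠ 1) :
    ∃ (C : Matrix ι κ 𝕜) (w : ι ⊕ κ → ℝ),
      (∀ P : Matrix (ι ⊕ κ) (ι ⊕ κ) 𝕜, P.PosSemidef → P ≠ 0 →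
        re (∑ i, ∑ j, C i j * P.toBlocks₁₂ i j) < ∑ k, w k * re (P k k)) ∧
      ∑ k, w k < re (∑ i, ∑ j, C i j * X i j) := by
  have : Nonempty (ι ⊕ κ) := not_isEmpty_iff.1 fun _ =>
    hX 0 .zero (ext fun i => isEmptyElim (.inl i : ι ⊕ κ)) (Subsingleton.elim _ _)
  let N : ℝ := Fintype.card (ι ⊕ κ)
  have hN : 0 < N := Nat.cast_pos.2 Fintype.card_pos
  let blockAndDiag : Matrix (ι ⊕ κ) (ι ⊕ κ) 𝕜 →ₗ[𝕜] (ι × κ) ⊕ (ι ⊕ κ) → 𝕜 :=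
    { toFun P := Sum.elim (fun p => P.toBlocks₁₂ p.1 p.2) P.diag
      map_add' P Q := by ext (_ | _) <;> rfl
      map_smul' c P := by ext (_ | _) <;> rfl }
  obtain ⟨c, s, hcs, hsX⟩ := exists_re_dotProduct_lt_of_forall_posSemidef_ne blockAndDiag hN
    (v := Sum.elim (fun p => X p.1 p.2) fun _ => ((1 : ℝ) : 𝕜)) fun P hP _ hPX =>
      hX P hP (ext fun i j => congrFun hPX (.inl (i, j)))
        (funext fun k => (congrFun hPX (.inr k)).trans RCLike.ofReal_one)
  have re_dotProduct_elim (M : Matrix ι κ 𝕜) (d : ι ⊕ κ → ℝ) :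
      re (c ⬝ᵥ Sum.elim (fun p => M p.1 p.2) fun k => (d k : 𝕜)) =
        re (∑ i, ∑ j, c (.inl (i, j)) * M i j) + ∑ k, re (c (.inr k)) * d k := by
    simp only [dotProduct, Fintype.sum_sum_type, Fintype.sum_prod_type, Sum.elim_inl, Sum.elim_inr,
      map_add, map_sum, RCLike.re_mul_ofReal]
  refine ⟨of fun i j => c (.inl (i, j)), fun k => s - re (c (.inr k)), fun P hP hP0 => ?_, ?_⟩
  · have hlt := hcs P hP hP0
    have diag_eq : P.diag = fun k => (re (P k k) : 𝕜) :=
      funext fun k => (hP.isHermitian.coe_re_apply_self k).symm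
    rw [show blockAndDiag P = Sum.elim _ P.diag from rfl, diag_eq, re_dotProduct_elim] at hlt
    simp only [sub_mul, Finset.sum_sub_distrib, ← Finset.mul_sum]
    rw [lt_sub_iff_add_lt, ← map_sum]
    exact hlt
  · rw [re_dotProduct_elim] at hsX
    simp only [mul_one] at hsX
    rw [Finset.sum_sub_distrib, Finset.sum_const, Finset.card_univ, nsmul_eq_mul,
      sub_lt_iff_lt_add]
    exact hsX

lemma sum_sum_mul_vecMulVec_star (C : Matrix ι κ 𝕜) (x : ι → 𝕜) (y : κ → 𝕜) :
    ∑ i, ∑ j, C i j * vecMulVec (star x) y i j = star x ⬝ᵥ C *ᵥ y := by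
  simp only [dotProduct, mulVec, vecMulVec_apply, Finset.mul_sum, mul_left_comm]

theorem exists_pos_weights_of_forall_posSemidef_diag_ne_one
    (hX : ∀ P : Matrix (ι ⊕ κ) (ι ⊕ κ) 𝕜, P.PosSemidef → P.toBlocks₁₂ = X → P.diag ≠ 1) :
    ∃ (C : Matrix ι κ 𝕜) (a : ι → ℝ) (b : κ → ℝ), (∀ i, 0 < a i) ∧ (∀ j, 0 < b j) ∧
      (∀ (x : ι → 𝕜) (y : κ → 𝕜),
        re (star x ⬝ᵥ C *ᵥ y) ≤ ∑ i, a i * ‖x i‖ ^ 2 + ∑ j, b j * ‖y j‖ ^ 2) ∧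
      ∑ i, a i + ∑ j, b j < re (∑ i, ∑ j, C i j * X i j) := by
  classical
  obtain ⟨C, w, hCw, hwX⟩ := exists_re_sum_lt_of_forall_posSemidef_diag_ne_one hX
  have form_lt (x : ι → 𝕜) (y : κ → 𝕜) (hxy : Sum.elim x y ≠ 0) :
      re (star x ⬝ᵥ C *ᵥ y) < ∑ i, w (.inl i) * ‖x i‖ ^ 2 + ∑ j, w (.inr j) * ‖y j‖ ^ 2 := by
    have hlt := hCw _ (posSemidef_vecMulVec_star_self (Sum.elim x y)) (by simpa using hxy)
    have diag_eq (k) : re (vecMulVec (star (Sum.elim x y)) (Sum.elim x y) k k) =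
        ‖Sum.elim x y k‖ ^ 2 := by
      rw [vecMulVec_apply, Pi.star_apply, RCLike.star_def, RCLike.conj_mul, ← RCLike.ofReal_pow,
        RCLike.ofReal_re]
    rw [show toBlocks₁₂ _ = vecMulVec (star x) y from rfl, sum_sum_mul_vecMulVec_star] at hlt
    simpa only [diag_eq, Fintype.sum_sum_type, Sum.elim_inl, Sum.elim_inr] using hlt
  refine ⟨C, fun i => w (.inl i), fun j => w (.inr j), fun i => ?_, fun j => ?_, fun x y => ?_, ?_⟩
  · have := form_lt (Pi.single i 1) 0 fun h => by simpa using congrFun h (.inl i)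
    simpa [Pi.single_apply, apply_ite] using this
  · have := form_lt 0 (Pi.single j 1) fun h => by simpa using congrFun h (.inr j)
    simpa [Pi.single_apply, apply_ite] using this
  · by_cases hxy : Sum.elim x y = 0
    · obtain rfl : x = 0 := funext fun i => congrFun hxy (.inl i)
      obtain rfl : y = 0 := funext fun j => congrFun hxy (.inr j)
      simp
    · exact (form_lt x y hxy).le
  · simpa only [Fintype.sum_sum_type] using hwX

variable [DecidableEq κ]

theorem re_sum_sum_mul_le_of_norm_hadamard_le_one
    (hX : ∀ A : Matrix ι κ 𝕜, ‖A‖ ≤ 1 → ‖X ⊙ A‖ ≤ 1) {C : Matrix ι κ 𝕜} {a : ι → ℝ} {b : κ → ℝ}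
    (ha : ∀ i, 0 < a i) (hb : ∀ j, 0 < b j)
    (hC : ∀ (x : ι → 𝕜) (y : κ → 𝕜),
      re (star x ⬝ᵥ C *ᵥ y) ≤ ∑ i, a i * ‖x i‖ ^ 2 + ∑ j, b j * ‖y j‖ ^ 2) :
    re (∑ i, ∑ j, C i j * X i j) ≤ ∑ i, a i + ∑ j, b j := by
  let α (i : ι) : 𝕜 := (√(a i) : ℝ)
  let β (j : κ) : 𝕜 := (√(b j) : ℝ)
  have star_α_ne_zero (i) : star (α i) ≠ 0 :=
    star_ne_zero.2 (RCLike.ofReal_ne_zero.2 (Real.sqrt_pos.2 (ha i)).ne')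
  have β_ne_zero (j) : β j ≠ 0 := RCLike.ofReal_ne_zero.2 (Real.sqrt_pos.2 (hb j)).ne'
  have norm_α_sq (i) : ‖α i‖ ^ 2 = a i := by
    rw [RCLike.norm_ofReal, sq_abs, Real.sq_sqrt (ha i).le]
  have norm_β_sq (j) : ‖β j‖ ^ 2 = b j := by
    rw [RCLike.norm_ofReal, sq_abs, Real.sq_sqrt (hb j).le]
  let A : Matrix ι κ 𝕜 := of fun i j => C i j / (2 * star (α i) * β j)
  have two_mul_form (x : ι → 𝕜) (y : κ → 𝕜) :
      2 * (star x ⬝ᵥ A *ᵥ y) = star (x / α) ⬝ᵥ C *ᵥ (y / β) := by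
    simp only [dotProduct, mulVec, Finset.mul_sum]
    refine Finset.sum_congr rfl fun i _ => Finset.sum_congr rfl fun j _ => ?_
    simp only [A, of_apply, star_div₀, Pi.star_apply, Pi.div_apply]
    field_simp
  have two_mul_form_hadamard : 2 * (star α ⬝ᵥ (X ⊙ A) *ᵥ β) = ∑ i, ∑ j, C i j * X i j := by
    simp only [dotProduct, mulVec, Finset.mul_sum]
    refine Finset.sum_congr rfl fun i _ => Finset.sum_congr rfl fun j _ => ?_
    have := star_α_ne_zero i
    have := β_ne_zero j
    simp only [A, of_apply, hadamard_apply, Pi.star_apply]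
    field_simp
  have norm_A_le : ‖A‖ ≤ 1 := (norm_le_one_iff_two_mul_re_dotProduct_le A).2 fun x y => by
    rw [← RCLike.ofNat_mul_re, two_mul_form]
    refine (hC _ _).trans_eq ?_
    simp only [Pi.div_apply, norm_div, div_pow, norm_α_sq, norm_β_sq,
      mul_div_cancel₀ _ (ha _).ne', mul_div_cancel₀ _ (hb _).ne']
  have hXA := (norm_le_one_iff_two_mul_re_dotProduct_le _).1 (hX A norm_A_le) α β
  simpa only [← RCLike.ofNat_mul_re, two_mul_form_hadamard, norm_α_sq, norm_β_sq] using hXA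

theorem exists_posSemidef_toBlocks₁₂_eq_diag_eq_one
    (hX : ∀ A : Matrix ι κ 𝕜, ‖A‖ ≤ 1 → ‖X ⊙ A‖ ≤ 1) :
    ∃ P : Matrix (ι ⊕ κ) (ι ⊕ κ) 𝕜, P.PosSemidef ∧ P.toBlocks₁₂ = X ∧ P.diag = 1 := by
  by_contra! hP
  obtain ⟨C, a, b, ha, hb, hC, hlt⟩ := exists_pos_weights_of_forall_posSemidef_diag_ne_one hP
  exact hlt.not_ge (re_sum_sum_mul_le_of_norm_hadamard_le_one hX ha hb hC)

end Completion

section InnerDimension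

variable {𝕜 E F : Type*} [RCLike 𝕜] [NormedAddCommGroup E] [InnerProductSpace 𝕜 E]
  [NormedAddCommGroup F] [InnerProductSpace 𝕜 F] [FiniteDimensional 𝕜 F]

lemma nonempty_linearIsometry_of_finrank_le [FiniteDimensional 𝕜 E]
    (h : Module.finrank 𝕜 E ≤ Module.finrank 𝕜 F) : Nonempty (E →ₗᵢ[𝕜] F) := by
  let e := stdOrthonormalBasis 𝕜 E
  let f := stdOrthonormalBasis 𝕜 F
  let T : E →ₗ[𝕜] F := e.toBasis.constr 𝕜 (f ∘ Fin.castLE h)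
  have T_comp_e : T ∘ e.toBasis = f ∘ Fin.castLE h :=
    funext fun i => e.toBasis.constr_basis 𝕜 _ i
  refine ⟨T.isometryOfOrthonormal (v := e.toBasis) (by simp [e.orthonormal]) ?_⟩
  rw [T_comp_e]
  exact f.orthonormal.comp _ (Fin.castLE_injective h)

lemma inner_orthogonalProjectionOnto_orthogonalProjectionOnto (W : Submodule 𝕜 E)
    [W.HasOrthogonalProjection] {x y : E} (hxy : x ∈ W ∨ y ∈ W) :
    inner 𝕜 (W.orthogonalProjectionOnto x) (W.orthogonalProjectionOnto y) = inner 𝕜 x y := by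
  obtain hx | hy := hxy
  · rw [Submodule.inner_orthogonalProjectionOnto_eq_of_mem_left,
      Submodule.coe_orthogonalProjectionOnto_apply, Submodule.starProjection_eq_self_iff.2 hx]
  · rw [Submodule.inner_orthogonalProjectionOnto_eq_of_mem_right,
      Submodule.coe_orthogonalProjectionOnto_apply, Submodule.starProjection_eq_self_iff.2 hy]

theorem exists_norm_le_inner_eq_of_min_card_le_finrank {ι κ : Type*} [Fintype ι] [Fintype κ]
    (h : min (Fintype.card ι) (Fintype.card κ) ≤ Module.finrank 𝕜 F) (x : ι → E) (y : κ → E) :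
    ∃ (x' : ι → F) (y' : κ → F), (∀ i, ‖x' i‖ ≤ ‖x i‖) ∧ (∀ j, ‖y' j‖ ≤ ‖y j‖) ∧
      ∀ i j, inner 𝕜 (x' i) (y' j) = inner 𝕜 (x i) (y j) := by
  obtain ⟨W, _, hWF, hxy⟩ : ∃ W : Submodule 𝕜 E, FiniteDimensional 𝕜 W ∧
      Module.finrank 𝕜 W ≤ Module.finrank 𝕜 F ∧ ∀ i j, x i ∈ W ∨ y j ∈ W := by
    obtain hι | hκ := min_le_iff.1 h
    · exact ⟨.span 𝕜 (Set.range x), .span_of_finite 𝕜 (Set.finite_range x),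
        (finrank_range_le_card x).trans hι, fun i _ => .inl (Submodule.subset_span ⟨i, rfl⟩)⟩
    · exact ⟨.span 𝕜 (Set.range y), .span_of_finite 𝕜 (Set.finite_range y),
        (finrank_range_le_card y).trans hκ, fun _ j => .inr (Submodule.subset_span ⟨j, rfl⟩)⟩
  obtain ⟨T⟩ := nonempty_linearIsometry_of_finrank_le (𝕜 := 𝕜) hWF
  have norm_le (z : E) : ‖T (W.orthogonalProjectionOnto z)‖ ≤ ‖z‖ := by
    rw [T.norm_map]
    exact W.norm_orthogonalProjectionOnto_apply_le z
  refine ⟨fun i => T (W.orthogonalProjectionOnto (x i)),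
    fun j => T (W.orthogonalProjectionOnto (y j)), fun i => norm_le _, fun j => norm_le _,
    fun i j => ?_⟩
  rw [T.inner_map_map, inner_orthogonalProjectionOnto_orthogonalProjectionOnto W (hxy i j)]

end InnerDimension

section Factorization

variable {𝕜 ι κ σ τ : Type*} [RCLike 𝕜] [Fintype τ]

lemma conjTranspose_mul_apply_eq_inner (L : Matrix τ ι 𝕜) (R : Matrix τ κ 𝕜) (i : ι) (j : κ) :
    (Lᴴ * R) i j = inner 𝕜 (WithLp.toLp 2 (L.col i)) (WithLp.toLp 2 (R.col j)) := by
  rw [EuclideanSpace.inner_toLp_toLp, dotProduct_comm]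
  rfl

variable [Fintype ι] [Fintype κ]

lemma exists_conjTranspose_mul_eq_of_min_card_le [Fintype σ]
    (hτ : min (Fintype.card ι) (Fintype.card κ) ≤ Fintype.card τ)
    (L : Matrix σ ι 𝕜) (R : Matrix σ κ 𝕜) :
    ∃ (L' : Matrix τ ι 𝕜) (R' : Matrix τ κ 𝕜),
      (∀ i, ∑ t, ‖L' t i‖ ^ 2 ≤ ∑ s, ‖L s i‖ ^ 2) ∧
      (∀ j, ∑ t, ‖R' t j‖ ^ 2 ≤ ∑ s, ‖R s j‖ ^ 2) ∧ L'ᴴ * R' = Lᴴ * R := by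
  obtain ⟨x, y, hx, hy, hxy⟩ := exists_norm_le_inner_eq_of_min_card_le_finrank (𝕜 := 𝕜)
    (F := EuclideanSpace 𝕜 τ) (by rwa [finrank_euclideanSpace])
    (fun i => WithLp.toLp 2 (L.col i)) (fun j => WithLp.toLp 2 (R.col j))
  refine ⟨of fun t i => x i t, of fun t j => y j t, fun i => ?_, fun j => ?_, ?_⟩
  · simpa only [EuclideanSpace.norm_sq_eq, col_apply, of_apply] using
      pow_le_pow_left₀ (norm_nonneg _) (hx i) 2
  · simpa only [EuclideanSpace.norm_sq_eq, col_apply, of_apply] using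
      pow_le_pow_left₀ (norm_nonneg _) (hy j) 2
  · ext i j
    rw [conjTranspose_mul_apply_eq_inner, conjTranspose_mul_apply_eq_inner]
    exact hxy i j

theorem schurNorm_le_one_iff_exists_factorization_general [DecidableEq κ]
    (hτ : min (Fintype.card ι) (Fintype.card κ) ≤ Fintype.card τ) (X : Matrix ι κ 𝕜) :
    (∀ A : Matrix ι κ 𝕜, ‖A‖ ≤ 1 → ‖X ⊙ A‖ ≤ 1) ↔
      ∃ (L : Matrix τ ι 𝕜) (R : Matrix τ κ 𝕜),
        (∀ i, ∑ t, ‖L t i‖ ^ 2 ≤ 1) ∧ (∀ j, ∑ t, ‖R t j‖ ^ 2 ≤ 1) ∧ X = Lᴴ * R := by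
  constructor
  · intro hX
    obtain ⟨P, hP, rfl, hdiag⟩ := exists_posSemidef_toBlocks₁₂_eq_diag_eq_one hX
    obtain ⟨B, rfl⟩ := exists_eq_conjTranspose_mul_self hP
    have sum_norm_sq_col (k) : ∑ s, ‖B s k‖ ^ 2 = 1 := RCLike.ofReal_injective (K := 𝕜) <| by
      rw [← conjTranspose_mul_self_apply_self, RCLike.ofReal_one]
      exact congrFun hdiag k
    obtain ⟨L, R, hL, hR, hLR⟩ :=
      exists_conjTranspose_mul_eq_of_min_card_le hτ B.toCols₁ B.toCols₂
    exact ⟨L, R, fun i => (hL i).trans_eq (sum_norm_sq_col _),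
      fun j => (hR j).trans_eq (sum_norm_sq_col _), hLR.symm⟩
  · rintro ⟨L, R, hL, hR, rfl⟩ A hA
    exact norm_conjTranspose_mul_hadamard_le_one hL hR hA

end Factorization

lemma ciSup_le_iff_of_nonneg {ι : Sort*} {f : ι → ℝ} (hf : BddAbove (Set.range f)) {a : ℝ}
    (ha : 0 ≤ a) : ⨆ i, f i ≤ a ↔ ∀ i, f i ≤ a :=
  ⟨fun h i => (le_ciSup hf i).trans h, fun h => Real.iSup_le h ha⟩

lemma colNorm_le_one_iff {l m : ℕ} (L : Matrix (Fin l) (Fin m) ℂ) :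
    colNorm L ≤ 1 ↔ ∀ j, ∑ i, ‖L i j‖ ^ 2 ≤ 1 := by
  simp only [colNorm, ciSup_le_iff_of_nonneg (Set.finite_range _).bddAbove zero_le_one,
    Real.sqrt_le_one]

lemma bddAbove_range_opNorm_hadamard {m n : ℕ} (X : Matrix (Fin m) (Fin n) ℂ) :
    BddAbove (Set.range fun A : {A : Matrix (Fin m) (Fin n) ℂ // opNorm A ≤ 1} =>
      opNorm (X ⊙ A.1)) := by
  have : ProperSpace (Matrix (Fin m) (Fin n) ℂ) := FiniteDimensional.proper ℂ _
  have continuous_hadamard : Continuous fun A : Matrix (Fin m) (Fin n) ℂ => X ⊙ A :=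
    continuous_matrix fun i j => continuous_const.mul (continuous_id.matrix_elem i j)
  refine ((isCompact_closedBall 0 1).bddAbove_image continuous_hadamard.norm.continuousOn).mono ?_
  rintro _ ⟨⟨A, hA⟩, rfl⟩
  exact ⟨A, mem_closedBall_zero_iff.2 hA, rfl⟩

lemma schurNorm_le_one_iff {m n : ℕ} (X : Matrix (Fin m) (Fin n) ℂ) :
    schurNorm X ≤ 1 ↔ ∀ A : Matrix (Fin m) (Fin n) ℂ, ‖A‖ ≤ 1 → ‖X ⊙ A‖ ≤ 1 := by
  rw [schurNorm, ciSup_le_iff_of_nonneg (bddAbove_range_opNorm_hadamard X) zero_le_one,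
    Subtype.forall]
  rfl

/-- `‖S_X‖ ≤ 1` iff `X = Lᴴ R` with column norms of `L` and `R` at most `1`, where the
inner dimension can be taken to be `min m n`. -/
theorem schurNorm_le_one_iff_exists_factorization
    (m n : ℕ) (X : Matrix (Fin m) (Fin n) ℂ) :
    schurNorm X ≤ 1 ↔
      ∃ (L : Matrix (Fin (min m n)) (Fin m) ℂ) (R : Matrix (Fin (min m n)) (Fin n) ℂ),
        colNorm L ≤ 1 ∧ colNorm R ≤ 1 ∧ X = Lᴴ * R := by
  simp only [schurNorm_le_one_iff, colNorm_le_one_iff]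
  exact schurNorm_le_one_iff_exists_factorization_general (by simp) X
end
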